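/- There exist an integer k0 and an absolute constant c > 0 such that for every k >= k0 and every clause density r > 2^k/k, with high probability the random formula Phi = Phi_k(n, floor(r*n)) satisfies |S(Phi)| <= exp(-c * 4^{-k} * n) * E[|S(Phi)|], where the expectation is over the uniform random formula. -/

import Mathlib

open Classical Finset Filter

noncomputable section

/-- A literal: a variable index together with a sign (`true` = positive occurrence). -/
abbrev Lit (n : ℕ) := Fin n × Bool

/-- A clause: an ordered `k`-tuple of literals. -/
abbrev Clause (n k : ℕ) := Fin k → Lit n

/-- A `k`-CNF formula with `m` clauses over `n` variables. -/
abbrev Formula (n k m : ℕ) := Fin m → Clause n k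

/-- A truth assignment. -/
abbrev Assignment (n : ℕ) := Fin n → Bool

/-- The truth value of a literal under an assignment. -/
def litVal {n : ℕ} (σ : Assignment n) (l : Lit n) : Bool :=
  if l.2 then σ l.1 else !(σ l.1)

/-- `σ` satisfies `Φ` if every clause contains at least one true literal. -/
def Satisfies {n k m : ℕ} (σ : Assignment n) (Φ : Formula n k m) : Prop :=
  ∀ i : Fin m, ∃ j : Fin k, litVal σ (Φ i j) = true

/-- The set of satisfying assignments of `Φ`. -/
def satSet (n k m : ℕ) (Φ : Formula n k m) : Finset (Assignment n) :=
  univ.filter fun σ => Satisfies σ Φ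

/-- The number of satisfying assignments of `Φ`. -/
def satCount (n k m : ℕ) (Φ : Formula n k m) : ℕ := (satSet n k m Φ).card

/-- Probability of an event under the uniformly random formula `Φ_k(n,m)`. -/
def prF (n k m : ℕ) (E : Formula n k m → Prop) : ℝ :=
  ((univ.filter fun Φ : Formula n k m => E Φ).card : ℝ) / (Fintype.card (Formula n k m) : ℝ)

/-- Expectation of a function of the uniformly random formula `Φ_k(n,m)`. -/
def expF (n k m : ℕ) (f : Formula n k m → ℝ) : ℝ :=
  (∑ Φ : Formula n k m, f Φ) / (Fintype.card (Formula n k m) : ℝ)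

/-- The number of occurrences of the literal `l` in `Φ`. -/
def occ (n k m : ℕ) (Φ : Formula n k m) (l : Lit n) : ℕ :=
  (univ.filter fun p : Fin m × Fin k => Φ p.1 p.2 = l).card

/-- The (signed) degree sequence of `Φ`. -/
def degSeq (n k m : ℕ) (Φ : Formula n k m) : Lit n → ℕ := occ n k m Φ

/-- Hamming distance between two assignments. -/
def hdist {n : ℕ} (σ τ : Assignment n) : ℕ :=
  (univ.filter fun x => σ x ≠ τ x).card

/-- The majority-vote assignment: `x ↦ true` iff `x` occurs more often positively
than negatively. -/
def sigmaMaj (n k m : ℕ) (Φ : Formula n k m) : Assignment n :=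
  fun x => decide (occ n k m Φ (x, false) < occ n k m Φ (x, true))

/-!
Planting a satisfying assignment `σ` makes each literal occurrence agree with `σ` slightly more
often than not, so the signed degrees of the first half of the clauses lean towards `σ`, and so do
those of the second half: the two degree sequences are positively correlated. In a uniformly random
formula the halves are independent with symmetric signed degrees, and whp their inner product stays
below a small multiple of `n`. By a Chernoff bound, a fixed assignment satisfies the formula while
the halves are that uncorrelated with probability smaller by an exponential factor than it satisfies
the formula at all. Hence the solutions counted on the whp event of uncorrelated halves have an
exponentially smaller mean, and Markov's inequality applies.
-/

open scoped BigOperators Matrix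

section Probability

variable {n k m m₁ m₂ : ℕ}

lemma expF_eq_expect (f : Formula n k m → ℝ) : expF n k m f = 𝔼 Φ, f Φ :=
  (Fintype.expect_eq_sum_div_card f).symm

lemma prF_eq_expect (E : Formula n k m → Prop) [DecidablePred E] :
    prF n k m E = 𝔼 Φ, if E Φ then (1 : ℝ) else 0 := by
  rw [prF, Fintype.expect_eq_sum_div_card, Finset.sum_boole]
  congr

lemma prF_le_expect {E : Formula n k m → Prop} {f : Formula n k m → ℝ} (hf : ∀ Φ, 0 ≤ f Φ)
    (hE : ∀ Φ, E Φ → 1 ≤ f Φ) : prF n k m E ≤ 𝔼 Φ, f Φ := by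
  rw [prF_eq_expect]
  refine expect_le_expect fun Φ _ => ?_
  split_ifs with h
  exacts [hE Φ h, hf Φ]

lemma prF_mono {E F : Formula n k m → Prop} (h : ∀ Φ, E Φ → F Φ) :
    prF n k m E ≤ prF n k m F := by
  rw [prF_eq_expect F]
  exact prF_le_expect (fun Φ => by positivity) fun Φ hΦ => (if_pos (h Φ hΦ)).ge

lemma prF_le_one (E : Formula n k m → Prop) : prF n k m E ≤ 1 :=
  div_le_one_of_le₀ (mod_cast Finset.card_le_univ _) (Nat.cast_nonneg _)

lemma prF_or_le (E F : Formula n k m → Prop) :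
    prF n k m (fun Φ => E Φ ∨ F Φ) ≤ prF n k m E + prF n k m F := by
  rw [prF_eq_expect E, prF_eq_expect F, ← expect_add_distrib]
  refine prF_le_expect (fun Φ => by positivity) fun Φ hΦ => ?_
  rcases hΦ with h | h <;> simp only [h, if_true, le_add_iff_nonneg_right, le_add_iff_nonneg_left]
  all_goals positivity

lemma prF_not [NeZero n] (E : Formula n k m → Prop) :
    prF n k m (fun Φ => ¬ E Φ) = 1 - prF n k m E := by
  rw [eq_sub_iff_add_eq, prF_eq_expect, prF_eq_expect E, ← expect_add_distrib]
  refine Eq.trans (expect_congr rfl fun Φ _ => ?_) (Fintype.expect_one (ι := Formula n k m))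
  by_cases h : E Φ <;> simp [h]

lemma prF_append (E : Formula n k (m₁ + m₂) → Prop) :
    prF n k (m₁ + m₂) E = 𝔼 Φ₁, prF n k m₂ fun Φ₂ => E (Fin.append Φ₁ Φ₂) := by
  simp_rw [prF_eq_expect]
  rw [← expect_product', univ_product_univ]
  exact (Fintype.expect_equiv (Fin.appendEquiv m₁ m₂) _ _ fun _ => rfl).symm

lemma prF_append_le {E : Formula n k (m₁ + m₂) → Prop} {P Q : Formula n k m₁ → Prop}
    [DecidablePred P] [DecidablePred Q] {α β : ℝ}
    (h : ∀ Φ₁, prF n k m₂ (fun Φ₂ => E (Fin.append Φ₁ Φ₂)) ≤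
      α * (if P Φ₁ then 1 else 0) + β * (if Q Φ₁ then 1 else 0)) :
    prF n k (m₁ + m₂) E ≤ α * prF n k m₁ P + β * prF n k m₁ Q := by
  rw [prF_append, prF_eq_expect P, prF_eq_expect Q, mul_expect, mul_expect, ← expect_add_distrib]
  exact expect_le_expect fun Φ₁ _ => h Φ₁

lemma one_sub_le_prF_le_mul_expect [NeZero n] {X : Formula n k m → ℝ}
    {A : Formula n k m → Prop} {ρ δ₁ δ₂ : ℝ} (hX : ∀ Φ, 0 ≤ X Φ) (hXpos : 0 < 𝔼 Φ, X Φ)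
    (hρ : 0 < ρ) (hA : prF n k m (fun Φ => ¬ A Φ) ≤ δ₁)
    (hXA : 𝔼 Φ, (if A Φ then X Φ else 0) ≤ (𝔼 Φ, X Φ) * δ₂) :
    1 - (δ₁ + δ₂ / ρ) ≤ prF n k m fun Φ => X Φ ≤ ρ * 𝔼 Ψ, X Ψ := by
  set μ := 𝔼 Ψ, X Ψ
  have htrunc : prF n k m (fun Φ => A Φ ∧ ρ * μ < X Φ) ≤ δ₂ / ρ := calc
    _ ≤ 𝔼 Φ, (if A Φ then X Φ else 0) / (ρ * μ) := by
      refine prF_le_expect (fun Φ => ?_) fun Φ ⟨hAΦ, hΦ⟩ => ?_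
      · have := hX Φ
        positivity
      · rw [if_pos hAΦ, one_le_div (by positivity)]
        exact hΦ.le
    _ ≤ μ * δ₂ / (ρ * μ) := by
      rw [← expect_div]
      gcongr
    _ = δ₂ / ρ := by field_simp
  have hbad : prF n k m (fun Φ => ¬ X Φ ≤ ρ * μ) ≤ δ₁ + δ₂ / ρ := calc
    _ ≤ prF n k m (fun Φ => ¬ A Φ ∨ A Φ ∧ ρ * μ < X Φ) :=
      prF_mono fun Φ hΦ => by
        rw [not_le] at hΦ
        tauto
    _ ≤ _ := (prF_or_le _ _).trans (add_le_add hA htrunc)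
  rw [prF_not] at hbad
  linarith

lemma prF_expect_add_le_le [NeZero n] (X : Formula n k m → ℝ) {δ : ℝ} (hδ : 0 < δ) :
    prF n k m (fun Φ => 𝔼 Ψ, X Ψ + δ ≤ X Φ) ≤
      (𝔼 Φ, X Φ ^ 2 - (𝔼 Φ, X Φ) ^ 2) / δ ^ 2 := by
  set μ := 𝔼 Ψ, X Ψ with hμ
  have hvar : 𝔼 Φ, (X Φ - μ) ^ 2 = 𝔼 Φ, X Φ ^ 2 - μ ^ 2 := by
    simp_rw [sub_sq, expect_add_distrib, expect_sub_distrib, ← expect_mul, ← mul_expect,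
      Fintype.expect_const, ← hμ]
    ring
  rw [← hvar, expect_div]
  refine prF_le_expect (fun Φ => by positivity) fun Φ hΦ => ?_
  rw [one_le_div (by positivity)]
  exact pow_le_pow_left₀ hδ.le (by linarith) 2

end Probability

section ProductExpectation

variable {α : Type*} [Fintype α]

lemma expect_prod_pi (f : α → ℝ) (m : ℕ) :
    𝔼 a : Fin m → α, ∏ i, f (a i) = (𝔼 x, f x) ^ m := by
  rw [expect_pow, Fintype.piFinset_univ]

lemma expect_ite_forall_prod (p : α → Prop) [DecidablePred p] (f : α → ℝ) (m : ℕ) :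
    𝔼 a : Fin m → α, (if ∀ i, p (a i) then ∏ i, f (a i) else 0) =
      (𝔼 x, if p x then f x else 0) ^ m := by
  rw [← expect_prod_pi]
  refine expect_congr rfl fun a _ => ?_
  rw [Fintype.prod_ite_zero]
  congr

lemma expect_ite_exists_prod (p : α → Prop) [DecidablePred p] (f : α → ℝ) (m : ℕ) :
    𝔼 a : Fin m → α, (if ∃ i, p (a i) then ∏ i, f (a i) else 0) =
      (𝔼 x, f x) ^ m - (𝔼 x, if p x then 0 else f x) ^ m := by
  have hnot (x : α) : (if p x then 0 else f x) = if ¬ p x then f x else 0 := by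
    by_cases h : p x <;> simp [h]
  simp_rw [hnot]
  rw [← expect_prod_pi, ← expect_ite_forall_prod (fun x => ¬ p x), ← expect_sub_distrib]
  refine expect_congr rfl fun a _ => ?_
  by_cases h : ∃ i, p (a i)
  · rw [if_pos h, if_neg (by simpa using h), sub_zero]
  · rw [if_neg h, if_pos (by simpa using h), sub_self]

end ProductExpectation

/-- The sign `±1` of a literal, given its Boolean sign or truth value. -/
def boolSign (b : Bool) : ℝ := if b then 1 else -1

/-- The signed degree of the variable `x` in `Φ`: its number of positive minus its number of
negative occurrences. -/
def signedDegree {n k m : ℕ} (Φ : Formula n k m) (x : Fin n) : ℝ :=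
  occ n k m Φ (x, true) - occ n k m Φ (x, false)

section MomentGeneratingFunctions

variable {n k m : ℕ}

lemma expect_lit (f : Lit n → ℝ) : 𝔼 l, f l = 𝔼 x, (f (x, true) + f (x, false)) / 2 := by
  rw [← univ_product_univ, expect_product]
  refine expect_congr rfl fun x _ => ?_
  rw [Fintype.expect_eq_sum_div_card, Fintype.sum_bool, Fintype.card_bool, Nat.cast_two]

lemma dotProduct_signedDegree (v : Fin n → ℝ) (Φ : Formula n k m) :
    v ⬝ᵥ signedDegree Φ = ∑ i, ∑ j, boolSign (Φ i j).2 * v (Φ i j).1 := by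
  have hocc (l : Lit n) : (occ n k m Φ l : ℝ) = ∑ i, ∑ j, if Φ i j = l then 1 else 0 := by
    rw [← Fintype.sum_prod_type', Finset.sum_boole, occ]
  have hlit (l : Lit n) : boolSign l.2 * v l.1 =
      ∑ x, v x * ((if l = (x, true) then 1 else 0) - if l = (x, false) then 1 else 0) := by
    obtain ⟨y, b⟩ := l
    cases b <;> simp [boolSign]
  simp_rw [dotProduct, signedDegree, hocc, hlit, ← sum_sub_distrib, mul_sum]
  rw [sum_comm]
  exact sum_congr rfl fun i _ => sum_comm

lemma exp_neg_dotProduct_signedDegree (v : Fin n → ℝ) (Φ : Formula n k m) :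
    Real.exp (-(v ⬝ᵥ signedDegree Φ)) =
      ∏ i, ∏ j, Real.exp (-(boolSign (Φ i j).2 * v (Φ i j).1)) := by
  simp_rw [dotProduct_signedDegree, ← sum_neg_distrib, Real.exp_sum]

lemma expect_exp_neg_boolSign_mul (v : Fin n → ℝ) :
    𝔼 l : Lit n, Real.exp (-(boolSign l.2 * v l.1)) = 𝔼 x, Real.cosh (v x) := by
  rw [expect_lit]
  refine expect_congr rfl fun x _ => ?_
  simp [boolSign, Real.cosh_eq, add_comm]

lemma expect_exp_dotProduct_signedDegree (v : Fin n → ℝ) :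
    𝔼 Φ : Formula n k m, Real.exp (v ⬝ᵥ signedDegree Φ) = (𝔼 x, Real.cosh (v x)) ^ (k * m) := by
  have h (Φ : Formula n k m) := exp_neg_dotProduct_signedDegree (-v) Φ
  simp_rw [neg_dotProduct, neg_neg] at h
  simp_rw [h]
  rw [expect_prod_pi fun c : Clause n k => ∏ j, Real.exp (-(boolSign (c j).2 * (-v) (c j).1)),
    expect_prod_pi fun l : Lit n => Real.exp (-(boolSign l.2 * (-v) l.1)),
    expect_exp_neg_boolSign_mul, pow_mul]
  simp_rw [Pi.neg_apply, Real.cosh_neg]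

lemma expect_ite_satisfies_exp (σ : Assignment n) (v : Fin n → ℝ) :
    𝔼 Φ : Formula n k m, (if Satisfies σ Φ then Real.exp (-(v ⬝ᵥ signedDegree Φ)) else 0) =
      ((𝔼 x, Real.cosh (v x)) ^ k - (𝔼 x, Real.exp (boolSign (σ x) * v x) / 2) ^ k) ^ m := by
  have hfalse : 𝔼 l : Lit n,
      (if litVal σ l = true then 0 else Real.exp (-(boolSign l.2 * v l.1))) =
        𝔼 x, Real.exp (boolSign (σ x) * v x) / 2 := by
    rw [expect_lit]
    refine expect_congr rfl fun x _ => ?_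
    cases h : σ x <;> simp [boolSign, litVal, h]
  simp_rw [exp_neg_dotProduct_signedDegree]
  rw [← hfalse, ← expect_exp_neg_boolSign_mul, ← expect_ite_exists_prod,
    ← expect_ite_forall_prod fun c : Clause n k => ∃ j, litVal σ (c j) = true]
  refine expect_congr rfl fun Φ _ => ?_
  congr

lemma prF_satisfies [NeZero n] (σ : Assignment n) :
    prF n k m (Satisfies σ) = (1 - (1 / 2) ^ k) ^ m := by
  have h := expect_ite_satisfies_exp (k := k) (m := m) σ 0
  simpa only [zero_dotProduct, neg_zero, Real.exp_zero, ← prF_eq_expect, Pi.zero_apply,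
    Real.cosh_zero, mul_zero, Fintype.expect_const, one_pow] using h

lemma expect_ite_satCount (A : Formula n k m → Prop) :
    𝔼 Φ, (if A Φ then (satCount n k m Φ : ℝ) else 0) =
      ∑ σ, prF n k m fun Φ => Satisfies σ Φ ∧ A Φ := by
  simp_rw [prF_eq_expect, ← expect_sum_comm]
  refine expect_congr rfl fun Φ _ => ?_
  by_cases h : A Φ <;> simp [h, satCount, satSet]

lemma expect_satCount [NeZero n] :
    𝔼 Φ, (satCount n k m Φ : ℝ) = 2 ^ n * (1 - (1 / 2) ^ k) ^ m := by
  have h := expect_ite_satCount (n := n) (k := k) (m := m) fun _ => True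
  simpa [prF_satisfies] using h

end MomentGeneratingFunctions

section TailBounds

variable {n k m : ℕ}

lemma cosh_boolSign_mul (b : Bool) (t : ℝ) : Real.cosh (boolSign b * t) = Real.cosh t := by
  cases b <;> simp [boolSign]

lemma cosh_le_one_add_sq {t : ℝ} (ht : |t| ≤ 1) : Real.cosh t ≤ 1 + t ^ 2 := by
  have hpos := (le_abs_self _).trans (Real.abs_exp_sub_one_sub_id_le ht)
  have hneg := (le_abs_self _).trans
    (Real.abs_exp_sub_one_sub_id_le (x := -t) (by rwa [abs_neg]))
  rw [Real.cosh_eq]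
  linarith [neg_sq t]

lemma mul_half_pow_le_one (k : ℕ) : k * (1 / 2 : ℝ) ^ k ≤ 1 := by
  rw [one_div_pow, mul_one_div, div_le_one (by positivity)]
  exact_mod_cast Nat.lt_two_pow_self.le

lemma pow_le_one_add_two_mul {A η : ℝ} (hA₀ : 0 ≤ A) (hη : 0 ≤ η) (hA : A ≤ 1 + η)
    (hkη : k * η ≤ 1) : A ^ k ≤ 1 + 2 * (k * η) := by
  have hkη₀ : 0 ≤ k * η := by positivity
  have hquad : Real.exp (k * η) - 1 - k * η ≤ (k * η) ^ 2 :=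
    (le_abs_self _).trans (Real.abs_exp_sub_one_sub_id_le (by rwa [abs_of_nonneg hkη₀]))
  calc A ^ k ≤ Real.exp η ^ k :=
        pow_le_pow_left₀ hA₀ (by linarith [Real.add_one_le_exp η]) k
    _ = Real.exp (k * η) := (Real.exp_nat_mul η k).symm
    _ ≤ 1 + 2 * (k * η) := by nlinarith

lemma pow_sub_half_pow_le {A B η b : ℝ} (hA₀ : 0 ≤ A) (hη : 0 ≤ η) (hA : A ≤ 1 + η)
    (hkη : k * η ≤ 1) (hb : 0 ≤ b) (hB : 1 + b ≤ B) (hηb : 4 * η ≤ (1 / 2) ^ k * b) :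
    A ^ k - (B / 2) ^ k ≤ (1 - (1 / 2) ^ k) * Real.exp (-((1 / 2) ^ k * k * b / 2)) := by
  set q : ℝ := (1 / 2) ^ k with hq
  have hq₀ : 0 ≤ q := by positivity
  have hq₁ : q ≤ 1 := pow_le_one₀ (by norm_num) (by norm_num)
  have hB' : 1 + k * b ≤ B ^ k :=
    (one_add_mul_le_pow (by linarith) k).trans (pow_le_pow_left₀ (by linarith) hB k)
  have hk : (k : ℝ) * (4 * η) ≤ k * (q * b) := by gcongr
  have hkb : 0 ≤ q * k * b := by positivity
  calc A ^ k - (B / 2) ^ k = A ^ k - q * B ^ k := by rw [hq, ← mul_pow]; ring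
    _ ≤ 1 + 2 * (k * η) - q * (1 + k * b) := by
        gcongr
        exact pow_le_one_add_two_mul hA₀ hη hA hkη
    _ ≤ (1 - q) * (1 - q * k * b / 2) := by nlinarith
    _ ≤ (1 - q) * Real.exp (-(q * k * b / 2)) :=
        mul_le_mul_of_nonneg_left (Real.one_sub_le_exp_neg _) (by linarith)

/- A uniformly random literal of a satisfied clause is true with probability more than `1 / 2`, by a
bias of order `2⁻ᵏ`; this tilts `v ⬝ᵥ signedDegree Φ` upwards when `v` correlates with `σ`. -/
lemma prF_satisfies_and_dotProduct_le [NeZero n] (σ : Assignment n) {v : Fin n → ℝ} {η b : ℝ}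
    (hη : 0 ≤ η) (hcosh : 𝔼 x, Real.cosh (v x) ≤ 1 + η) (hkη : k * η ≤ 1) (hb : 0 ≤ b)
    (hbv : b ≤ 𝔼 x, boolSign (σ x) * v x) (hηb : 4 * η ≤ (1 / 2) ^ k * b) (τ : ℝ) :
    prF n k m (fun Φ => Satisfies σ Φ ∧ v ⬝ᵥ signedDegree Φ ≤ τ) ≤
      (1 - (1 / 2) ^ k) ^ m * Real.exp (τ - (1 / 2) ^ k * k * b / 2 * m) := by
  have hexp : 1 + b ≤ 𝔼 x, Real.exp (boolSign (σ x) * v x) := calc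
    1 + b ≤ 𝔼 x, (1 + boolSign (σ x) * v x) := by
      rw [expect_add_distrib, Fintype.expect_const]
      gcongr
    _ ≤ _ := expect_le_expect fun x _ => by
      rw [add_comm]
      exact Real.add_one_le_exp _
  have hhalf : (𝔼 x, Real.exp (boolSign (σ x) * v x)) / 2 ≤ 𝔼 x, Real.cosh (v x) := by
    rw [expect_div]
    refine expect_le_expect fun x _ => ?_
    rw [← cosh_boolSign_mul (σ x), Real.cosh_eq]
    gcongr
    exact le_add_of_nonneg_right (Real.exp_pos _).le
  have hmarkov : prF n k m (fun Φ => Satisfies σ Φ ∧ v ⬝ᵥ signedDegree Φ ≤ τ) ≤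
      𝔼 Φ : Formula n k m,
        Real.exp τ * if Satisfies σ Φ then Real.exp (-(v ⬝ᵥ signedDegree Φ)) else 0 := by
    refine prF_le_expect (fun Φ => by positivity) fun Φ ⟨hsat, hle⟩ => ?_
    rw [if_pos hsat, ← Real.exp_add, ← sub_eq_add_neg]
    exact Real.one_le_exp (sub_nonneg.2 hle)
  calc _ ≤ Real.exp τ * ((𝔼 x, Real.cosh (v x)) ^ k -
        ((𝔼 x, Real.exp (boolSign (σ x) * v x)) / 2) ^ k) ^ m := by
        rwa [← mul_expect, expect_ite_satisfies_exp, ← expect_div] at hmarkov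
    _ ≤ Real.exp τ * ((1 - (1 / 2) ^ k) * Real.exp (-((1 / 2) ^ k * k * b / 2))) ^ m := by
        gcongr
        · exact sub_nonneg.2 (pow_le_pow_left₀ (by linarith) hhalf k)
        · exact pow_sub_half_pow_le (expect_nonneg fun x _ => (Real.cosh_pos _).le) hη hcosh hkη
            hb hexp hηb
    _ = _ := by
        rw [mul_pow, ← Real.exp_nat_mul, mul_left_comm, ← Real.exp_add]
        ring_nf

lemma prF_satisfies_and_boolSign_dotProduct_le [NeZero n] (σ : Assignment n) :
    prF n k m (fun Φ => Satisfies σ Φ ∧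
        (boolSign ∘ σ) ⬝ᵥ signedDegree Φ ≤ (1 / 2) ^ k * k * m / 4) ≤
      (1 - (1 / 2) ^ k) ^ m * Real.exp (-(((1 / 2) ^ k) ^ 2 * k * m / 16)) := by
  set q : ℝ := (1 / 2) ^ k with hq
  have hq₀ : 0 < q := by positivity
  have hq₁ : q ≤ 1 := pow_le_one₀ (by norm_num) (by norm_num)
  have hkq : k * q ≤ 1 := mul_half_pow_le_one k
  have hcosh : 𝔼 x, Real.cosh (((q / 4) • (boolSign ∘ σ)) x) ≤ 1 + (q / 4) ^ 2 :=
    expect_le univ_nonempty fun x _ => by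
      rw [Pi.smul_apply, smul_eq_mul, mul_comm, Function.comp_apply, cosh_boolSign_mul]
      exact cosh_le_one_add_sq (abs_le.2 ⟨by linarith, by linarith⟩)
  have hbias : q / 4 ≤ 𝔼 x, boolSign (σ x) * ((q / 4) • (boolSign ∘ σ)) x :=
    le_expect univ_nonempty fun x _ => by
      cases h : σ x <;> simp [boolSign, h]
  have h := prF_satisfies_and_dotProduct_le (k := k) (m := m) σ (by positivity) hcosh
    (by nlinarith) (by positivity) hbias (by rw [← hq]; linarith) (q / 4 * (q * k * m / 4))
  simp only [smul_dotProduct, smul_eq_mul, ← hq,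
    mul_le_mul_iff_right₀ (by positivity : 0 < q / 4)] at h
  convert h using 3
  ring

lemma prF_lt_dotProduct_le {v : Fin n → ℝ} {η : ℝ} (hcosh : 𝔼 x, Real.cosh (v x) ≤ 1 + η)
    (τ : ℝ) : prF n k m (fun Φ => τ < v ⬝ᵥ signedDegree Φ) ≤ Real.exp (-τ + η * (k * m)) := by
  calc _ ≤ 𝔼 Φ : Formula n k m, Real.exp (-τ) * Real.exp (v ⬝ᵥ signedDegree Φ) := by
        refine prF_le_expect (fun Φ => by positivity) fun Φ hΦ => ?_
        rw [← Real.exp_add]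
        exact Real.one_le_exp (by linarith)
    _ = Real.exp (-τ) * (𝔼 x, Real.cosh (v x)) ^ (k * m) := by
        rw [← mul_expect, expect_exp_dotProduct_signedDegree]
    _ ≤ Real.exp (-τ) * Real.exp η ^ (k * m) := by
        have := expect_nonneg fun x (_ : x ∈ univ) => (Real.cosh_pos (v x)).le
        gcongr
        linarith [Real.add_one_le_exp η]
    _ = _ := by
        rw [← Real.exp_nat_mul, ← Real.exp_add]
        push_cast
        ring_nf

end TailBounds

section SecondMoment

variable {n k m : ℕ}

lemma expect_cosh_eq [NeZero n] (v : Fin n → ℝ) :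
    𝔼 x, Real.cosh (v x) = 1 + (∑ x, (Real.cosh (v x) - 1)) / n := by
  rw [Fintype.expect_eq_sum_div_card, sum_sub_distrib, sum_const, card_univ, Fintype.card_fin,
    nsmul_one, sub_div, div_self (NeZero.ne _), add_sub_cancel]

lemma expect_exp_mul_signedDegree [NeZero n] (s : ℝ) (x : Fin n) :
    𝔼 Φ : Formula n k m, Real.exp (s * signedDegree Φ x) =
      (1 + (Real.cosh s - 1) / n) ^ (k * m) := by
  have h := expect_exp_dotProduct_signedDegree (k := k) (m := m) (Pi.single x s)
  rw [expect_cosh_eq, Fintype.sum_eq_single x fun z hz => by simp [hz], Pi.single_eq_same] at h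
  simpa only [single_dotProduct] using h

lemma expect_expect_exp_signedDegree [NeZero n] (s : ℝ) :
    𝔼 Φ : Formula n k m, 𝔼 x, Real.exp (s * signedDegree Φ x) =
      (1 + (Real.cosh s - 1) / n) ^ (k * m) := by
  rw [expect_comm]
  simp_rw [expect_exp_mul_signedDegree]
  rw [Fintype.expect_const]

lemma expect_exp_mul_signedDegree_mul_exp [NeZero n] (s : ℝ) {x y : Fin n} (hxy : x ≠ y) :
    𝔼 Φ : Formula n k m, Real.exp (s * signedDegree Φ x) * Real.exp (s * signedDegree Φ y) =
      (1 + 2 * ((Real.cosh s - 1) / n)) ^ (k * m) := by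
  have h := expect_exp_dotProduct_signedDegree (k := k) (m := m) (Pi.single x s + Pi.single y s)
  rw [expect_cosh_eq, Fintype.sum_eq_add x y hxy fun z hz => by simp [hz]] at h
  simp only [add_dotProduct, single_dotProduct, Real.exp_add, Pi.add_apply, Pi.single_eq_same,
    Pi.single_eq_of_ne hxy, Pi.single_eq_of_ne hxy.symm, add_zero, zero_add] at h
  rw [h, ← two_mul, mul_div_assoc]

lemma expect_sq_expect_exp_signedDegree_le [NeZero n] (s : ℝ) :
    𝔼 Φ : Formula n k m, (𝔼 x, Real.exp (s * signedDegree Φ x)) ^ 2 ≤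
      (𝔼 Φ : Formula n k m, 𝔼 x, Real.exp (s * signedDegree Φ x)) ^ 2 +
        (1 + (Real.cosh (2 * s) - 1) / n) ^ (k * m) / n := by
  set c : ℝ := (Real.cosh s - 1) / n
  have hc₀ : 0 ≤ c := div_nonneg (by linarith [Real.one_le_cosh s]) (Nat.cast_nonneg n)
  set P : ℝ := (1 + (Real.cosh (2 * s) - 1) / n) ^ (k * m)
  have hpair (x y : Fin n) :
      𝔼 Φ : Formula n k m, Real.exp (s * signedDegree Φ x) * Real.exp (s * signedDegree Φ y) ≤
        ((1 + c) ^ (k * m)) ^ 2 + if x = y then P else 0 := by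
    rcases eq_or_ne x y with rfl | hxy
    · simp_rw [← Real.exp_add, ← add_mul, ← two_mul]
      rw [expect_exp_mul_signedDegree, if_pos trivial]
      exact le_add_of_nonneg_left (sq_nonneg _)
    · rw [expect_exp_mul_signedDegree_mul_exp s hxy, if_neg hxy, add_zero, pow_right_comm]
      exact pow_le_pow_left₀ (by positivity) (by linarith [add_sq 1 c, sq_nonneg c]) _
  calc _ = 𝔼 x : Fin n, 𝔼 y : Fin n, 𝔼 Φ : Formula n k m,
        Real.exp (s * signedDegree Φ x) * Real.exp (s * signedDegree Φ y) := by
        simp_rw [sq, expect_mul_expect]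
        rw [expect_comm]
        exact expect_congr rfl fun x _ => expect_comm _ _ _
    _ ≤ 𝔼 x : Fin n, 𝔼 y : Fin n, (((1 + c) ^ (k * m)) ^ 2 + if x = y then P else 0) :=
        expect_le_expect fun x _ => expect_le_expect fun y _ => hpair x y
    _ = ((1 + c) ^ (k * m)) ^ 2 + P / n := by
        simp [expect_add_distrib, NNRat.smul_def, div_eq_inv_mul]
    _ = _ := by rw [expect_expect_exp_signedDegree]

lemma one_add_div_pow_le_exp [NeZero n] {z R : ℝ} (hz : 0 ≤ z) (hm : k * m ≤ R * n) :
    (1 + z / n) ^ (k * m) ≤ Real.exp (R * z) := by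
  have hn : (0 : ℝ) < n := Nat.cast_pos.2 (NeZero.pos n)
  calc (1 + z / n) ^ (k * m) ≤ Real.exp (z / n) ^ (k * m) :=
        pow_le_pow_left₀ (by positivity) (by linarith [Real.add_one_le_exp (z / n)]) _
    _ = Real.exp (k * m * (z / n)) := by rw [← Real.exp_nat_mul, Nat.cast_mul]
    _ ≤ Real.exp (R * n * (z / n)) := by gcongr
    _ = Real.exp (R * z) := by
        congr 1
        field_simp

lemma prF_lt_expect_exp_signedDegree_le [NeZero n] {s R η : ℝ} (hs : |s| ≤ 1) (hR : 0 ≤ R)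
    (hη₀ : 0 < η) (hη₁ : η ≤ 1) (hRs : 4 * R * s ^ 2 ≤ η) (hm : k * m ≤ R * n) :
    prF n k m (fun Φ => 1 + η < 𝔼 x, Real.exp (s * signedDegree Φ x)) ≤
      4 * Real.exp (R * (Real.cosh (2 * s) - 1)) / η ^ 2 / n := by
  have hmean : 𝔼 Φ : Formula n k m, 𝔼 x, Real.exp (s * signedDegree Φ x) ≤ 1 + η / 2 := calc
    _ = (1 + (Real.cosh s - 1) / n) ^ (k * m) := expect_expect_exp_signedDegree s
    _ ≤ Real.exp (R * (Real.cosh s - 1)) :=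
      one_add_div_pow_le_exp (by linarith [Real.one_le_cosh s]) hm
    _ ≤ Real.exp (η / 4) := by
      gcongr
      nlinarith [cosh_le_one_add_sq hs]
    _ ≤ 1 + η / 2 := by
      have := (le_abs_self _).trans (Real.abs_exp_sub_one_sub_id_le
        (x := η / 4) (abs_le.2 ⟨by linarith, by linarith⟩))
      nlinarith
  have hcosh : 0 ≤ Real.cosh (2 * s) - 1 := by linarith [Real.one_le_cosh (2 * s)]
  have hsecond := expect_sq_expect_exp_signedDegree_le (n := n) (k := k) (m := m) s
  calc _ ≤ _ := prF_mono fun Φ hΦ => by linarith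
    _ ≤ _ := prF_expect_add_le_le (fun Φ => 𝔼 x, Real.exp (s * signedDegree Φ x)) (half_pos hη₀)
    _ ≤ (1 + (Real.cosh (2 * s) - 1) / n) ^ (k * m) / n / (η / 2) ^ 2 := by
        gcongr
        linarith
    _ ≤ Real.exp (R * (Real.cosh (2 * s) - 1)) / n / (η / 2) ^ 2 := by
        gcongr
        exact one_add_div_pow_le_exp hcosh hm
    _ = _ := by
        field_simp
        norm_num

lemma prF_lt_expect_cosh_signedDegree_le [NeZero n] {s R η : ℝ} (hs : |s| ≤ 1) (hR : 0 ≤ R)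
    (hη₀ : 0 < η) (hη₁ : η ≤ 1) (hRs : 4 * R * s ^ 2 ≤ η) (hm : k * m ≤ R * n) :
    prF n k m (fun Φ => 1 + η < 𝔼 x, Real.cosh (s * signedDegree Φ x)) ≤
      8 * Real.exp (R * (Real.cosh (2 * s) - 1)) / η ^ 2 / n := by
  have hpos := prF_lt_expect_exp_signedDegree_le hs hR hη₀ hη₁ hRs hm
  have hneg := prF_lt_expect_exp_signedDegree_le (s := -s) (by rwa [abs_neg]) hR hη₀ hη₁
    (by rwa [neg_sq]) hm
  rw [mul_neg, Real.cosh_neg] at hneg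
  calc _ ≤ prF n k m (fun Φ => 1 + η < 𝔼 x, Real.exp (s * signedDegree Φ x) ∨
        1 + η < 𝔼 x, Real.exp (-s * signedDegree Φ x)) := prF_mono fun Φ hΦ => by
        simp_rw [Real.cosh_eq, ← expect_div, expect_add_distrib, ← neg_mul] at hΦ
        by_contra! h
        linarith [h.1, h.2]
    _ ≤ _ := (prF_or_le _ _).trans (add_le_add hpos hneg)
    _ = _ := by ring

end SecondMoment

section TwoHalves

variable {n k m₁ m₂ : ℕ}

lemma satisfies_append (σ : Assignment n) (Φ₁ : Formula n k m₁) (Φ₂ : Formula n k m₂) :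
    Satisfies σ (Fin.append Φ₁ Φ₂) ↔ Satisfies σ Φ₁ ∧ Satisfies σ Φ₂ := by
  simp [Satisfies, Fin.forall_fin_add]

/-- The event that the first `m₁` and the last `m₂` clauses of `Φ` have nearly uncorrelated signed
degree sequences. It also bounds the exponential moments of the signed degrees of the first part,
so that the inner product with the signed degrees of an independent second part concentrates. -/
def UncorrelatedHalves (s η τ : ℝ) (Φ : Formula n k (m₁ + m₂)) : Prop :=
  let D₁ := signedDegree fun i => Φ (Fin.castAdd m₂ i)
  let D₂ := signedDegree fun i => Φ (Fin.natAdd m₁ i)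
  𝔼 x, Real.cosh (s * D₁ x) ≤ 1 + η ∧ s * (D₁ ⬝ᵥ D₂) ≤ τ

lemma uncorrelatedHalves_append {s η τ : ℝ} {Φ₁ : Formula n k m₁} {Φ₂ : Formula n k m₂} :
    UncorrelatedHalves s η τ (Fin.append Φ₁ Φ₂) ↔
      𝔼 x, Real.cosh (s * signedDegree Φ₁ x) ≤ 1 + η ∧
        (s • signedDegree Φ₁) ⬝ᵥ signedDegree Φ₂ ≤ τ := by
  simp only [UncorrelatedHalves, Fin.append_left, Fin.append_right, smul_dotProduct,
    smul_eq_mul]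

lemma prF_not_uncorrelatedHalves_le (s η τ : ℝ) :
    prF n k (m₁ + m₂) (fun Φ => ¬ UncorrelatedHalves s η τ Φ) ≤
      prF n k m₁ (fun Φ₁ => 1 + η < 𝔼 x, Real.cosh (s * signedDegree Φ₁ x)) +
        Real.exp (-τ + η * (k * m₂)) := by
  have h := prF_append_le (E := fun Φ : Formula n k (m₁ + m₂) => ¬ UncorrelatedHalves s η τ Φ)
    (P := fun Φ₁ => 1 + η < 𝔼 x, Real.cosh (s * signedDegree Φ₁ x)) (Q := fun _ => True)
    (α := 1) (β := Real.exp (-τ + η * (k * m₂))) fun Φ₁ => by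
      rw [if_pos trivial]
      split_ifs with hcosh
      · linarith [prF_le_one (n := n) (k := k) (m := m₂)
          fun Φ₂ => ¬ UncorrelatedHalves s η τ (Fin.append Φ₁ Φ₂), Real.exp_pos (-τ + η * (k * m₂))]
      · rw [mul_zero, zero_add, mul_one]
        refine (prF_mono fun Φ₂ hΦ₂ => ?_).trans
          (prF_lt_dotProduct_le (v := s • signedDegree Φ₁) (not_lt.1 hcosh) τ)
        by_contra hle
        exact hΦ₂ (uncorrelatedHalves_append.2 ⟨not_lt.1 hcosh, not_lt.1 hle⟩)
  rw [one_mul] at h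
  exact h.trans (by gcongr; exact mul_le_of_le_one_right (Real.exp_pos _).le (prF_le_one _))

lemma prF_satisfies_and_uncorrelatedHalves_append_le [NeZero n] (σ : Assignment n)
    {s η b τ₁ : ℝ} (hs : 0 ≤ s) (hη : 0 ≤ η) (hkη : k * η ≤ 1) (hb : 0 ≤ b)
    (hbn : b * n ≤ s * τ₁) (hηb : 4 * η ≤ (1 / 2) ^ k * b) (τ : ℝ) (Φ₁ : Formula n k m₁) :
    prF n k m₂ (fun Φ₂ => Satisfies σ (Fin.append Φ₁ Φ₂) ∧
        UncorrelatedHalves s η τ (Fin.append Φ₁ Φ₂)) ≤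
      (1 - (1 / 2) ^ k) ^ m₂ *
          (if Satisfies σ Φ₁ ∧ (boolSign ∘ σ) ⬝ᵥ signedDegree Φ₁ ≤ τ₁ then 1 else 0) +
        (1 - (1 / 2) ^ k) ^ m₂ * Real.exp (τ - (1 / 2) ^ k * k * b / 2 * m₂) *
          (if Satisfies σ Φ₁ then 1 else 0) := by
  have hq : (0 : ℝ) ≤ 1 - (1 / 2) ^ k :=
    sub_nonneg.2 (pow_le_one₀ (by norm_num) (by norm_num))
  simp_rw [satisfies_append, uncorrelatedHalves_append]
  by_cases hsat : Satisfies σ Φ₁ ∧ 𝔼 x, Real.cosh (s * signedDegree Φ₁ x) ≤ 1 + η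
  · by_cases hdot : (boolSign ∘ σ) ⬝ᵥ signedDegree Φ₁ ≤ τ₁
    · rw [if_pos ⟨hsat.1, hdot⟩, mul_one]
      exact le_add_of_le_of_nonneg ((prF_mono fun Φ₂ h => h.1.2).trans_eq (prF_satisfies σ))
        (by positivity)
    · have hbias : b ≤ 𝔼 x, boolSign (σ x) * (s • signedDegree Φ₁) x := calc
        b ≤ s * ((boolSign ∘ σ) ⬝ᵥ signedDegree Φ₁) / n := by
          rw [le_div_iff₀ (Nat.cast_pos.2 (NeZero.pos n))]
          exact hbn.trans (mul_le_mul_of_nonneg_left (not_le.1 hdot).le hs)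
        _ = _ := by
          rw [← smul_eq_mul, ← dotProduct_smul, Fintype.expect_eq_sum_div_card, Fintype.card_fin]
          rfl
      rw [if_neg fun h => hdot h.2, if_pos hsat.1, mul_zero, zero_add, mul_one]
      exact (prF_mono fun Φ₂ h => ⟨h.1.2, h.2.2⟩).trans
        (prF_satisfies_and_dotProduct_le σ hη hsat.2 hkη hb hbias hηb τ)
  · have hempty (Φ₂ : Formula n k m₂) : ¬ ((Satisfies σ Φ₁ ∧ Satisfies σ Φ₂) ∧
        𝔼 x, Real.cosh (s * signedDegree Φ₁ x) ≤ 1 + η ∧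
          (s • signedDegree Φ₁) ⬝ᵥ signedDegree Φ₂ ≤ τ) :=
      fun h => hsat ⟨h.1.1, h.2.1⟩
    simp_rw [prF_eq_expect, if_neg (hempty _), Fintype.expect_const]
    positivity

lemma prF_satisfies_and_uncorrelatedHalves_le [NeZero n] (σ : Assignment n) {s η b : ℝ}
    (hs : 0 ≤ s) (hη : 0 ≤ η) (hkη : k * η ≤ 1) (hb : 0 ≤ b)
    (hbn : b * n ≤ s * ((1 / 2) ^ k * k * m₁ / 4)) (hηb : 4 * η ≤ (1 / 2) ^ k * b) (τ : ℝ) :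
    prF n k (m₁ + m₂) (fun Φ => Satisfies σ Φ ∧ UncorrelatedHalves s η τ Φ) ≤
      (1 - (1 / 2) ^ k) ^ (m₁ + m₂) * (Real.exp (-(((1 / 2) ^ k) ^ 2 * k * m₁ / 16)) +
        Real.exp (τ - (1 / 2) ^ k * k * b / 2 * m₂)) := by
  set q : ℝ := (1 / 2) ^ k
  have hq₁ : 0 ≤ 1 - q := sub_nonneg.2 (pow_le_one₀ (by norm_num) (by norm_num))
  have hsplit := prF_append_le
    (E := fun Φ : Formula n k (m₁ + m₂) => Satisfies σ Φ ∧ UncorrelatedHalves s η τ Φ)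
    (P := fun Φ₁ => Satisfies σ Φ₁ ∧ (boolSign ∘ σ) ⬝ᵥ signedDegree Φ₁ ≤ q * k * m₁ / 4)
    (Q := Satisfies σ) (α := (1 - q) ^ m₂)
    (β := (1 - q) ^ m₂ * Real.exp (τ - q * k * b / 2 * m₂))
    (prF_satisfies_and_uncorrelatedHalves_append_le σ hs hη hkη hb hbn hηb τ)
  calc _ ≤ _ := hsplit
    _ ≤ (1 - q) ^ m₂ * ((1 - q) ^ m₁ * Real.exp (-(q ^ 2 * k * m₁ / 16))) +
        (1 - q) ^ m₂ * Real.exp (τ - q * k * b / 2 * m₂) * (1 - q) ^ m₁ := by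
        rw [prF_satisfies]
        gcongr
        exact prF_satisfies_and_boolSign_dotProduct_le σ
    _ = _ := by ring

end TwoHalves

section FirstMomentGap

/-- The rate per variable at which the number of solutions falls short of its mean, where `R` is
the number of literal occurrences per variable and `s` the inverse temperature applied to the signed
degrees. It is half of the threshold per variable for the correlation of the two halves. -/
def gapRate (k : ℕ) (R s : ℝ) : ℝ := s * ((1 / 2) ^ k) ^ 2 * R ^ 2 / 512

lemma gapRate_min (k : ℕ) {R : ℝ} (hR : 0 < R) :
    gapRate k R (min (((1 / 2) ^ k) ^ 2) (1 / R) / 2048) =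
      1 / 2 ^ 20 * min (R / 4 ^ k) ((R / 4 ^ k) ^ 2) := by
  have hq : ((1 / 2 : ℝ) ^ k) ^ 2 = 1 / 4 ^ k := by
    rw [pow_right_comm, ← one_div_pow]
    norm_num
  calc gapRate k R (min (((1 / 2) ^ k) ^ 2) (1 / R) / 2048)
      = 1 / 2 ^ 20 * (min (1 / 4 ^ k) (1 / R) * (R ^ 2 / 4 ^ k)) := by
        rw [gapRate, hq]
        ring
    _ = 1 / 2 ^ 20 * min (R / 4 ^ k) ((R / 4 ^ k) ^ 2) := by
        rw [min_mul_of_nonneg _ _ (by positivity), min_comm]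
        congr 2 <;> field_simp

/- With `s` at most of order `4⁻ᵏ` the bias of a planted formula dominates the excess
`4 * R * s ^ 2` allowed for the exponential moments; with `s` at most of order `1 / R` the second
half is the bottleneck of the first moment bound. -/
lemma exists_gapRate_eq (k : ℕ) {R : ℝ} (hR : 0 < R) :
    ∃ s : ℝ, 0 < s ∧ s ≤ ((1 / 2) ^ k) ^ 2 / 2048 ∧ s * R ≤ 1 / 2048 ∧
      gapRate k R s = 1 / 2 ^ 20 * min (R / 4 ^ k) ((R / 4 ^ k) ^ 2) := by
  refine ⟨min (((1 / 2) ^ k) ^ 2) (1 / R) / 2048, by positivity, ?_, ?_, gapRate_min k hR⟩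
  · gcongr
    exact min_le_left _ _
  · rw [← le_div_iff₀ hR, div_right_comm]
    gcongr
    exact min_le_right _ _

variable {n k m₁ m₂ : ℕ} {R s : ℝ}

lemma prF_not_uncorrelatedHalves_le_of_density [NeZero n] (hR : 0 < R) (hs₀ : 0 < s)
    (hs : s ≤ ((1 / 2) ^ k) ^ 2 / 2048) (hsR : s * R ≤ 1 / 2048) (hm₁ : k * m₁ ≤ R * n)
    (hm₂ : k * m₂ ≤ R * n) :
    prF n k (m₁ + m₂) (fun Φ => ¬ UncorrelatedHalves s (4 * R * s ^ 2) (2 * gapRate k R s * n) Φ) ≤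
      8 * Real.exp (R * (Real.cosh (2 * s) - 1)) / (4 * R * s ^ 2) ^ 2 / n +
        Real.exp (-(gapRate k R s * n)) := by
  set q : ℝ := (1 / 2) ^ k
  have hq₀ : 0 < q := by positivity
  have hq₁ : q ≤ 1 := pow_le_one₀ (by norm_num) (by norm_num)
  have hs₁ : s ≤ 1 := by nlinarith
  refine (prF_not_uncorrelatedHalves_le _ _ _).trans (add_le_add ?_ (Real.exp_le_exp.2 ?_))
  · exact prF_lt_expect_cosh_signedDegree_le (by rwa [abs_of_pos hs₀]) hR.le (by positivity)
      (by nlinarith) le_rfl hm₁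
  · have hτ : 2 * gapRate k R s = s * q ^ 2 * R ^ 2 / 256 := by
      rw [gapRate]
      ring
    have h₁ := mul_le_mul_of_nonneg_left hm₂ (by positivity : 0 ≤ 4 * R * s ^ 2)
    have h₂ := mul_le_mul_of_nonneg_right hs (by positivity : 0 ≤ 4 * s * R ^ 2 * n)
    rw [hτ, gapRate]
    linarith

lemma prF_satisfies_and_uncorrelatedHalves_le_of_density [NeZero n] (σ : Assignment n)
    (hR : 0 < R) (hs₀ : 0 < s) (hs : s ≤ ((1 / 2) ^ k) ^ 2 / 2048) (hsR : s * R ≤ 1 / 2048)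
    (hm₁ : R * n / 4 ≤ k * m₁) (hm₂ : R * n / 4 ≤ k * m₂) :
    prF n k (m₁ + m₂) (fun Φ => Satisfies σ Φ ∧
        UncorrelatedHalves s (4 * R * s ^ 2) (2 * gapRate k R s * n) Φ) ≤
      (1 - (1 / 2) ^ k) ^ (m₁ + m₂) * (2 * Real.exp (-(2 * gapRate k R s * n))) := by
  set q : ℝ := (1 / 2) ^ k
  have hq₀ : 0 < q := by positivity
  have hq₁ : q ≤ 1 := pow_le_one₀ (by norm_num) (by norm_num)
  have hkq : k * q ≤ 1 := mul_half_pow_le_one k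
  have hkη : k * (4 * R * s ^ 2) ≤ 1 := by
    have hks : k * s ≤ 1 := by
      have : (k : ℝ) * s ≤ k * (q ^ 2 / 2048) := by gcongr
      nlinarith
    calc k * (4 * R * s ^ 2) = 4 * ((s * R) * (k * s)) := by ring
      _ ≤ 4 * (1 / 2048 * 1) := by gcongr
      _ ≤ 1 := by norm_num
  have hηb : 4 * (4 * R * s ^ 2) ≤ q * (s * q * R / 16) := by
    have := mul_le_mul_of_nonneg_right hs (by positivity : 0 ≤ 16 * R * s)
    linarith [(by positivity : 0 ≤ q ^ 2 * R * s)]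
  have hbn : s * q * R / 16 * n ≤ s * (q * k * m₁ / 4) := by
    have := mul_le_mul_of_nonneg_left hm₁ (mul_pos hs₀ hq₀).le
    linarith
  refine (prF_satisfies_and_uncorrelatedHalves_le σ hs₀.le (by positivity) hkη (by positivity)
    hbn hηb _).trans ?_
  have hfirst : -(q ^ 2 * k * m₁ / 16) ≤ -(2 * gapRate k R s * n) := by
    have h₁ := mul_le_mul_of_nonneg_left hm₁ (by positivity : 0 ≤ q ^ 2)
    have h₂ := mul_le_mul_of_nonneg_left hsR (by positivity : 0 ≤ q ^ 2 * R * n)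
    rw [gapRate]
    linarith [(by positivity : 0 ≤ q ^ 2 * R * n)]
  have hsecond : 2 * gapRate k R s * n - q * k * (s * q * R / 16) / 2 * m₂ ≤
      -(2 * gapRate k R s * n) := by
    have := mul_le_mul_of_nonneg_left hm₂ (by positivity : 0 ≤ s * q ^ 2 * R)
    rw [gapRate]
    linarith
  refine mul_le_mul_of_nonneg_left ?_ (pow_nonneg (sub_nonneg.2 hq₁) _)
  linarith [Real.exp_le_exp.2 hfirst, Real.exp_le_exp.2 hsecond]

lemma one_sub_le_prF_satCount_le [NeZero n] (hk : 0 < k) (hR : 0 < R) (hs₀ : 0 < s)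
    (hs : s ≤ ((1 / 2) ^ k) ^ 2 / 2048) (hsR : s * R ≤ 1 / 2048)
    (hm₁ : (k * m₁ : ℝ) ∈ Set.Icc (R * n / 4) (R * n))
    (hm₂ : (k * m₂ : ℝ) ∈ Set.Icc (R * n / 4) (R * n)) :
    1 - (8 * Real.exp (R * (Real.cosh (2 * s) - 1)) / (4 * R * s ^ 2) ^ 2 / n +
        3 * Real.exp (-(gapRate k R s * n))) ≤
      prF n k (m₁ + m₂) fun Φ => (satCount n k (m₁ + m₂) Φ : ℝ) ≤
        Real.exp (-(gapRate k R s * n)) *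
          expF n k (m₁ + m₂) fun Ψ => (satCount n k (m₁ + m₂) Ψ : ℝ) := by
  have hq : (1 / 2 : ℝ) ^ k < 1 := pow_lt_one₀ (by norm_num) (by norm_num) hk.ne'
  have hpos : 0 < 𝔼 Φ, (satCount n k (m₁ + m₂) Φ : ℝ) := by
    rw [expect_satCount]
    have := sub_pos.2 hq
    positivity
  have htrunc := calc
    𝔼 Φ, (if UncorrelatedHalves s (4 * R * s ^ 2) (2 * gapRate k R s * n) Φ
        then (satCount n k (m₁ + m₂) Φ : ℝ) else 0)
      ≤ ∑ _σ : Assignment n, (1 - (1 / 2) ^ k) ^ (m₁ + m₂) *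
          (2 * Real.exp (-(2 * gapRate k R s * n))) := by
        rw [expect_ite_satCount]
        exact sum_le_sum fun σ _ => prF_satisfies_and_uncorrelatedHalves_le_of_density σ hR hs₀ hs
          hsR hm₁.1 hm₂.1
    _ = (𝔼 Φ, (satCount n k (m₁ + m₂) Φ : ℝ)) *
          (2 * Real.exp (-(2 * gapRate k R s * n))) := by
        rw [expect_satCount]
        simp [mul_assoc]
  have h := one_sub_le_prF_le_mul_expect (fun Φ => Nat.cast_nonneg _) hpos
    (Real.exp_pos (-(gapRate k R s * n)))
    (prF_not_uncorrelatedHalves_le_of_density hR hs₀ hs hsR hm₁.2 hm₂.2) htrunc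
  rw [expF_eq_expect]
  have hexp : 2 * Real.exp (-(2 * gapRate k R s * n)) / Real.exp (-(gapRate k R s * n)) =
      2 * Real.exp (-(gapRate k R s * n)) := by
    rw [mul_div_assoc, ← Real.exp_sub]
    ring_nf
  rw [hexp] at h
  linarith

end FirstMomentGap

section Asymptotics

lemma exists_floor_eq_add {t : ℝ} (ht : 4 ≤ t) :
    ∃ m₁ m₂ : ℕ, ⌊t⌋₊ = m₁ + m₂ ∧ (m₁ : ℝ) ∈ Set.Icc (t / 4) t ∧ (m₂ : ℝ) ∈ Set.Icc (t / 4) t := by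
  have hle := Nat.floor_le (show 0 ≤ t by linarith)
  have hlt := Nat.lt_floor_add_one t
  refine ⟨⌊t⌋₊ / 2, ⌊t⌋₊ - ⌊t⌋₊ / 2, by omega, ?_⟩
  have h₁ : ((⌊t⌋₊ : ℕ) : ℝ) ≤ 2 * (⌊t⌋₊ / 2 : ℕ) + 1 := by exact_mod_cast (by omega)
  have h₂ : 2 * ((⌊t⌋₊ / 2 : ℕ) : ℝ) ≤ ⌊t⌋₊ := by exact_mod_cast (by omega)
  rw [Nat.cast_sub (Nat.div_le_self _ _)]
  exact ⟨⟨by linarith, by linarith⟩, ⟨by linarith, by linarith⟩⟩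

lemma tendsto_one_sub_div_add_exp (A : ℝ) {β : ℝ} (hβ : 0 < β) :
    Tendsto (fun n : ℕ => 1 - (A / n + 3 * Real.exp (-(β * n)))) atTop (nhds 1) := by
  have hexp : Tendsto (fun n : ℕ => Real.exp (-(β * n))) atTop (nhds 0) :=
    Real.tendsto_exp_neg_atTop_nhds_zero.comp
      (tendsto_natCast_atTop_atTop.const_mul_atTop hβ)
  simpa using ((tendsto_const_div_atTop_nhds_zero_nat A).add (hexp.const_mul 3)).const_sub 1

lemma tendsto_prF_satCount_le_exp_mono {k : ℕ} {m : ℕ → ℕ} {ρ₁ ρ₂ : ℝ} (hρ : ρ₁ ≤ ρ₂)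
    (h : Tendsto (fun n => prF n k (m n) fun Φ => (satCount n k (m n) Φ : ℝ) ≤
      Real.exp (ρ₁ * n) * expF n k (m n) fun Ψ => (satCount n k (m n) Ψ : ℝ)) atTop (nhds 1)) :
    Tendsto (fun n => prF n k (m n) fun Φ => (satCount n k (m n) Φ : ℝ) ≤
      Real.exp (ρ₂ * n) * expF n k (m n) fun Ψ => (satCount n k (m n) Ψ : ℝ)) atTop (nhds 1) := by
  refine tendsto_of_tendsto_of_tendsto_of_le_of_le h tendsto_const_nhds
    (fun n => prF_mono fun Φ hΦ => hΦ.trans ?_) fun _ => prF_le_one _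
  rw [expF_eq_expect]
  gcongr

lemma inv_four_pow_le_min {k : ℕ} (hk : 0 < k) {r : ℝ} (hr : 2 ^ k / k < r) :
    ((4 : ℝ) ^ k)⁻¹ ≤ min (k * r / 4 ^ k) ((k * r / 4 ^ k) ^ 2) := by
  have hkr : 2 ^ k ≤ k * r := by
    rw [mul_comm]
    exact ((div_lt_iff₀ (Nat.cast_pos.2 hk)).1 hr).le
  have hδ : (1 / 2 : ℝ) ^ k ≤ k * r / 4 ^ k := calc
    (1 / 2 : ℝ) ^ k = 2 ^ k / 4 ^ k := by
      rw [← div_pow]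
      norm_num
    _ ≤ k * r / 4 ^ k := by gcongr
  have hfour : ((4 : ℝ) ^ k)⁻¹ = ((1 / 2) ^ k) ^ 2 := by
    rw [pow_right_comm, ← inv_pow]
    norm_num
  rw [hfour]
  refine le_min (le_trans ?_ hδ) (by gcongr)
  exact pow_le_of_le_one (by positivity) (pow_le_one₀ (by norm_num) (by norm_num)) two_ne_zero

end Asymptotics

theorem statement2_general {k : ℕ} (hk : 0 < k) {r : ℝ} (hr : 0 < r) :
    Tendsto
      (fun n : ℕ =>
        let m := ⌊r * (n : ℝ)⌋₊
        prF n k m fun Φ =>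
          (satCount n k m Φ : ℝ) ≤
            Real.exp (-(1 / 2 ^ 20) * min (k * r / 4 ^ k) ((k * r / 4 ^ k) ^ 2) * n) *
              expF n k m (fun Ψ => (satCount n k m Ψ : ℝ)))
      atTop (nhds 1) := by
  set R : ℝ := k * r
  have hR : 0 < R := by positivity
  obtain ⟨s, hs₀, hsq, hsR, hrate⟩ := exists_gapRate_eq k hR
  have hrate₀ : 0 < gapRate k R s := by
    rw [hrate]
    positivity
  refine tendsto_of_tendsto_of_tendsto_of_le_of_le' (tendsto_one_sub_div_add_exp
    (8 * Real.exp (R * (Real.cosh (2 * s) - 1)) / (4 * R * s ^ 2) ^ 2) hrate₀)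
    tendsto_const_nhds ?_ (Eventually.of_forall fun _ => prF_le_one _)
  filter_upwards [eventually_gt_atTop 0,
    (tendsto_natCast_atTop_atTop.const_mul_atTop hr).eventually_ge_atTop 4] with n hn hrn
  have : NeZero n := ⟨hn.ne'⟩
  obtain ⟨m₁, m₂, hm, hm₁, hm₂⟩ := exists_floor_eq_add hrn
  have hscale {m : ℕ} (h : (m : ℝ) ∈ Set.Icc (r * n / 4) (r * n)) :
      (k * m : ℝ) ∈ Set.Icc (R * n / 4) (R * n) := by
    rw [mul_assoc, mul_div_assoc]
    exact ⟨by gcongr; exact h.1, by gcongr; exact h.2⟩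
  have hexp : -(1 / 2 ^ 20) * min (R / 4 ^ k) ((R / 4 ^ k) ^ 2) * n = -(gapRate k R s * n) := by
    rw [hrate]
    ring
  simp only [hexp]
  rw [hm]
  exact one_sub_le_prF_satCount_le hk hR hs₀ hsq hsR (hscale hm₁) (hscale hm₂)

/-- There are `k0` and an absolute constant `c > 0` such that for every
`k ≥ k0` and every density `r > 2^k/k`, whp `|S(Φ)| ≤ exp(-c 4^{-k} n) E[|S(Φ)|]`. -/
theorem statement2 :
    ∃ (k0 : ℕ) (c : ℝ), 0 < c ∧
      ∀ k : ℕ, k0 ≤ k → ∀ r : ℝ, (2 : ℝ) ^ k / k < r →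
        Tendsto
          (fun n : ℕ =>
            let m := ⌊r * (n : ℝ)⌋₊
            prF n k m fun Φ =>
              (satCount n k m Φ : ℝ) ≤
                Real.exp (-c * ((4 : ℝ) ^ k)⁻¹ * n) *
                  expF n k m (fun Ψ => (satCount n k m Ψ : ℝ)))
          atTop (nhds 1) := by
  refine ⟨1, 1 / 2 ^ 20, by norm_num, fun k hk r hr => ?_⟩
  have hr₀ : 0 < r := lt_of_le_of_lt (by positivity) hr
  exact tendsto_prF_satCount_le_exp_mono
    (mul_le_mul_of_nonpos_left (inv_four_pow_le_min hk hr) (by norm_num))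
    (statement2_general hk hr₀)
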